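/- Let Γ₁ and Γ₂ be completed primitive simple graphs on disjoint vertex sets, let (a₁,b₁,c₁) be a triangle of Γ₁ (three mutually adjacent vertices) and (a₂,b₂,c₂) a triangle of Γ₂. Let Γ be the graph obtained from the disjoint union Γ₁ ⊔ Γ₂ by identifying a₁ with a₂, b₁ with b₂ and c₁ with c₂, and then deleting the three triangle edges ab, bc, ca (which occur in both Γ₁ and Γ₂). Then Γ is a completed primitive 4-regular graph, and Γ is reducible: its vertex-connectivity is exactly 3, since removing the three identified vertices a, b, c disconnects it. -/

import Mathlib

/-!
Write `T` for the common triangle, and count an edge cut of a vertex set `A` by the ordered pairs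
of adjacent vertices leaving `A` (`card_cutEdges`). Every edge of the gluing comes from exactly one
piece, so if `A₁`, `A₂` are the traces of `A` on the pieces and `A` contains `k` vertices of `T`,
then `|A₁| + |A₂| = |A| + k` (`IsGluing.card_trace`) and
`cut(A) = cut₁(A₁) + cut₂(A₂) - 2 k (3 - k)` (`IsGluing.card_cutPairs`).

In a completed primitive graph a one-vertex set has cut `4`, and a set with at least two vertices
on both sides has cut at least `5`. Applied with `|A| = 1`, the two formulas give 4-regularity
(`IsGluing.degree_eq`). For a nontrivial cut, `A` may be replaced by its complement so that
`k ≤ 1`. If `k = 0`, either both traces are nonempty and the cut is at least `4 + 4`, or one trace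
is all of `A` and the cut is at least `5`. If `k = 1`, both traces are nonempty and one has at
least two vertices, so the cut is at least `5 + 4 - 4` (`IsGluing.cut_gt`).

A 4-regular graph without small nontrivial cuts is always 3-connected
(`induce_compl_connected`), which also gives connectedness. Finally no edge joins the two pieces
outside `T`, and both pieces have vertices outside `T`, so deleting `T` disconnects the gluing.
-/

open scoped Classical

/-- The set of edges of `G` with one endpoint in `A` and the other outside `A`. -/
noncomputable def cutEdges {V : Type*} [Fintype V] (G : SimpleGraph V) (A : Finset V) :
    Finset (Sym2 V) :=
  G.edgeFinset.filter (fun e => ∃ x, x ∈ e ∧ x ∈ A ∧ ∃ y, y ∈ e ∧ y ∉ A)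

/-- A finite simple graph is *completed primitive* if it is 4-regular, connected, has at
least 3 vertices, and every edge cut separating two parts with at least two vertices each
has size strictly greater than 4. -/
def CompletedPrimitive {V : Type*} [Fintype V] (G : SimpleGraph V) : Prop :=
  (∀ v : V, G.degree v = 4) ∧ G.Connected ∧ 3 ≤ Fintype.card V ∧
    ∀ A : Finset V, 2 ≤ A.card → 2 ≤ Aᶜ.card → 4 < (cutEdges G A).card

/-- `x` is one of the three triangle vertices `a`, `b`, `c`. -/
def InTriangle {W : Type*} (a b c x : W) : Prop := x = a ∨ x = b ∨ x = c

/-- The vertex set of the gluing of two graphs along triangles `(a₁,b₁,c₁)` and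
`(a₂,b₂,c₂)`: all vertices of `W₁`, and the vertices of `W₂` other than the triangle
vertices (which get identified with `a₁`, `b₁`, `c₁`). -/
def GluedVert (W₁ W₂ : Type*) (a₂ b₂ c₂ : W₂) : Type _ :=
  W₁ ⊕ {z : W₂ // ¬ InTriangle a₂ b₂ c₂ z}

noncomputable instance {W₁ W₂ : Type*} [Fintype W₁] [Fintype W₂] (a₂ b₂ c₂ : W₂) :
    Fintype (GluedVert W₁ W₂ a₂ b₂ c₂) := by
  unfold GluedVert; infer_instance

/-- The gluing of `G₁` and `G₂` along the triangles `(a₁,b₁,c₁)` and `(a₂,b₂,c₂)`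
(identifying `a₁ ~ a₂`, `b₁ ~ b₂`, `c₁ ~ c₂`), with the three triangle edges deleted. -/
def glueOnTriangles {W₁ W₂ : Type*} (G₁ : SimpleGraph W₁) (G₂ : SimpleGraph W₂)
    (a₁ b₁ c₁ : W₁) (a₂ b₂ c₂ : W₂) : SimpleGraph (GluedVert W₁ W₂ a₂ b₂ c₂) :=
  SimpleGraph.fromRel (fun u v =>
    match u, v with
    | Sum.inl x, Sum.inl y =>
        G₁.Adj x y ∧ ¬ (InTriangle a₁ b₁ c₁ x ∧ InTriangle a₁ b₁ c₁ y)
    | Sum.inl x, Sum.inr y =>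
        (x = a₁ ∧ G₂.Adj a₂ y.1) ∨ (x = b₁ ∧ G₂.Adj b₂ y.1) ∨ (x = c₁ ∧ G₂.Adj c₂ y.1)
    | Sum.inr _, Sum.inl _ => False
    | Sum.inr y, Sum.inr z => G₂.Adj y.1 z.1)


/-! ### Counting cuts by ordered pairs -/

/-- The ordered pairs `(x, y)` of adjacent vertices with `x ∈ A` and `y ∉ A`; these are the
cut edges of `A`, each oriented so as to leave `A`. -/
noncomputable def cutPairs {V : Type*} [Fintype V] (G : SimpleGraph V) (A : Finset V) :
    Finset (V × V) :=
  Finset.univ.filter (fun p => p.1 ∈ A ∧ p.2 ∉ A ∧ G.Adj p.1 p.2)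

lemma mem_cutPairs {V : Type*} [Fintype V] (G : SimpleGraph V) (A : Finset V) (p : V × V) :
    p ∈ cutPairs G A ↔ p.1 ∈ A ∧ p.2 ∉ A ∧ G.Adj p.1 p.2 := by
  simp [cutPairs]

lemma card_cutEdges {V : Type*} [Fintype V] (G : SimpleGraph V) (A : Finset V) :
    (cutEdges G A).card = (cutPairs G A).card := by
  symm
  refine Finset.card_bij (fun p _ => s(p.1, p.2)) ?_ ?_ ?_
  · rintro ⟨x, y⟩ h
    rw [mem_cutPairs] at h
    simp only [cutEdges, Finset.mem_filter, SimpleGraph.mem_edgeFinset, SimpleGraph.mem_edgeSet]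
    exact ⟨h.2.2, x, by simp, h.1, y, by simp, h.2.1⟩
  · rintro ⟨x, y⟩ h ⟨x', y'⟩ h' he
    rw [mem_cutPairs] at h h'
    rcases Sym2.eq_iff.1 he with ⟨rfl, rfl⟩ | ⟨rfl, rfl⟩
    · rfl
    · exact absurd h.1 h'.2.1
  · intro e he
    simp only [cutEdges, Finset.mem_filter, SimpleGraph.mem_edgeFinset] at he
    obtain ⟨hE, x, hx, hxA, y, hy, hyA⟩ := he
    have hne : x ≠ y := by rintro rfl; exact hyA hxA
    obtain rfl := (Sym2.mem_and_mem_iff hne).1 ⟨hx, hy⟩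
    exact ⟨(x, y), (mem_cutPairs _ _ _).2 ⟨hxA, hyA, hE⟩, rfl⟩

lemma card_cutPairs_compl {V : Type*} [Fintype V] (G : SimpleGraph V) (A : Finset V) :
    (cutPairs G Aᶜ).card = (cutPairs G A).card := by
  refine Finset.card_bij (fun p _ => p.swap) ?_ ?_ ?_
  · rintro ⟨x, y⟩ h
    simp only [mem_cutPairs, Finset.mem_compl, not_not, Prod.swap] at h ⊢
    exact ⟨h.2.1, h.1, h.2.2.symm⟩
  · intro p _ q _ h
    exact Prod.swap_injective h
  · rintro ⟨x, y⟩ h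
    refine ⟨(y, x), ?_, rfl⟩
    simp only [mem_cutPairs, Finset.mem_compl, not_not] at h ⊢
    exact ⟨h.2.1, h.1, h.2.2.symm⟩

lemma card_cutPairs_singleton {V : Type*} [Fintype V] (G : SimpleGraph V) (v : V) :
    (cutPairs G {v}).card = G.degree v := by
  rw [← SimpleGraph.card_neighborFinset_eq_degree]
  symm
  refine Finset.card_bij (fun y _ => (v, y)) ?_ ?_ ?_
  · intro y h
    rw [SimpleGraph.mem_neighborFinset] at h
    simp [mem_cutPairs, h, h.ne']
  · intro y _ z _ h
    exact (Prod.mk.inj h).2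
  · rintro ⟨x, y⟩ h
    simp only [mem_cutPairs, Finset.mem_singleton] at h
    obtain ⟨rfl, -, h⟩ := h
    exact ⟨y, by simpa using h, rfl⟩

/-! ### Three-connectedness -/

/-- In a 4-regular graph, let `S` have at most two vertices and let all neighbours of `x ∈ X` lie
in `X ∪ S`. Then `X` contains `x` and at least two neighbours of `x`. -/
lemma three_le_card_of_closed {V : Type*} [Fintype V] (G : SimpleGraph V)
    (hdeg : ∀ v, G.degree v = 4) (S X : Finset V) (hS : S.card ≤ 2) (x : V) (hx : x ∈ X)
    (hX : ∀ y, G.Adj x y → y ∈ X ∨ y ∈ S) : 3 ≤ X.card := by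
  have hsub : G.neighborFinset x ⊆ X.erase x ∪ S := by
    intro y hy
    rw [SimpleGraph.mem_neighborFinset] at hy
    rw [Finset.mem_union, Finset.mem_erase]
    rcases hX y hy with h | h
    · exact Or.inl ⟨hy.ne', h⟩
    · exact Or.inr h
  have h1 := Finset.card_le_card hsub
  have h2 := Finset.card_union_le (X.erase x) S
  rw [SimpleGraph.card_neighborFinset_eq_degree, hdeg] at h1
  rw [Finset.card_erase_of_mem hx] at h2
  omega

/-- A 4-regular graph without small nontrivial edge cuts is 3-connected. If deleting `S` with
`|S| ≤ 2` separates `X` from `Y`, every edge leaving `X` or `Y` ends in `S`, so the two cuts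
have at most `8` edges together, whereas each of them has at least `5`. -/
lemma induce_compl_connected {V : Type*} [Fintype V] [Nonempty V] (G : SimpleGraph V)
    (hdeg : ∀ v, G.degree v = 4)
    (hcut : ∀ A : Finset V, 2 ≤ A.card → 2 ≤ Aᶜ.card → 4 < (cutPairs G A).card)
    (S : Finset V) (hS : S.card ≤ 2) : (G.induce ((↑S : Set V)ᶜ)).Connected := by
  have hne : Nonempty ↥((↑S : Set V)ᶜ) := by
    by_contra hcon
    have hall : ∀ v, v ∈ S := by
      intro v
      by_contra hv
      exact hcon ⟨⟨v, by simpa using hv⟩⟩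
    obtain ⟨v⟩ := ‹Nonempty V›
    have := three_le_card_of_closed G hdeg S S hS v (hall v) (fun y _ => Or.inl (hall y))
    omega
  refine SimpleGraph.Connected.mk ?_
  intro u v
  by_contra huv
  set H := G.induce ((↑S : Set V)ᶜ) with hH
  let X : Finset V := Finset.univ.filter
    (fun w => ∃ hw : w ∈ ((↑S : Set V)ᶜ), H.Reachable u ⟨w, hw⟩)
  let Y : Finset V := Finset.univ.filter
    (fun w => ∃ hw : w ∈ ((↑S : Set V)ᶜ), ¬ H.Reachable u ⟨w, hw⟩)
  have mX : ∀ w, w ∈ X ↔ ∃ hw : w ∈ ((↑S : Set V)ᶜ), H.Reachable u ⟨w, hw⟩ := by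
    intro w; simp [X]
  have mY : ∀ w, w ∈ Y ↔ ∃ hw : w ∈ ((↑S : Set V)ᶜ), ¬ H.Reachable u ⟨w, hw⟩ := by
    intro w; simp [Y]
  have hXS : ∀ x ∈ X, ∀ y, G.Adj x y → y ∈ X ∨ y ∈ S := by
    intro x hx y hxy
    by_cases hy : y ∈ S
    · exact Or.inr hy
    · left
      obtain ⟨hxs, hr⟩ := (mX x).1 hx
      refine (mX y).2 ⟨by simpa using hy, hr.trans (SimpleGraph.Adj.reachable ?_)⟩
      simpa [hH] using hxy
  have hYS : ∀ x ∈ Y, ∀ y, G.Adj x y → y ∈ Y ∨ y ∈ S := by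
    intro x hx y hxy
    by_cases hy : y ∈ S
    · exact Or.inr hy
    · left
      obtain ⟨hxs, hr⟩ := (mY x).1 hx
      refine (mY y).2 ⟨by simpa using hy, fun h => hr (h.trans (SimpleGraph.Adj.reachable ?_))⟩
      simpa [hH] using hxy.symm
  have hXY : Disjoint X Y := by
    rw [Finset.disjoint_left]
    intro w hx hy
    obtain ⟨_, h⟩ := (mX w).1 hx
    obtain ⟨_, h'⟩ := (mY w).1 hy
    exact h' h
  have huX : u.1 ∈ X := (mX _).2 ⟨u.2, SimpleGraph.Reachable.refl _⟩
  have hvY : v.1 ∈ Y := (mY _).2 ⟨v.2, huv⟩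
  have cX := three_le_card_of_closed G hdeg S X hS u.1 huX (hXS _ huX)
  have cY := three_le_card_of_closed G hdeg S Y hS v.1 hvY (hYS _ hvY)
  have cX' : Y.card ≤ Xᶜ.card :=
    Finset.card_le_card (fun w hw => Finset.mem_compl.2 (Finset.disjoint_right.1 hXY hw))
  have cY' : X.card ≤ Yᶜ.card :=
    Finset.card_le_card (fun w hw => Finset.mem_compl.2 (Finset.disjoint_left.1 hXY hw))
  have eX := hcut X (by omega) (by omega)
  have eY := hcut Y (by omega) (by omega)
  have hdisj : Disjoint (cutPairs G X) (cutPairs G Y) := by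
    rw [Finset.disjoint_left]
    intro p hp hq
    rw [mem_cutPairs] at hp hq
    exact Finset.disjoint_left.1 hXY hp.1 hq.1
  have hsub : cutPairs G X ∪ cutPairs G Y ⊆
      S.biUnion (fun s => (G.neighborFinset s).image (fun x => (x, s))) := by
    rintro ⟨x, y⟩ hp
    rw [Finset.mem_union, mem_cutPairs, mem_cutPairs] at hp
    simp only [Finset.mem_biUnion, Finset.mem_image, SimpleGraph.mem_neighborFinset]
    have key : y ∈ S ∧ G.Adj x y := by
      rcases hp with ⟨h1, h2, h3⟩ | ⟨h1, h2, h3⟩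
      · exact ⟨(hXS x h1 y h3).resolve_left h2, h3⟩
      · exact ⟨(hYS x h1 y h3).resolve_left h2, h3⟩
    exact ⟨y, key.1, x, key.2.symm, rfl⟩
  have h8 : (S.biUnion (fun s => (G.neighborFinset s).image (fun x => (x, s)))).card
      ≤ S.card * 4 := by
    refine Finset.card_biUnion_le_card_mul _ _ _ ?_
    intro s _
    refine Finset.card_image_le.trans ?_
    rw [SimpleGraph.card_neighborFinset_eq_degree, hdeg]
  have := Finset.card_le_card hsub
  rw [Finset.card_union_of_disjoint hdisj] at this
  omega

/-! ### Cuts of a completed primitive graph -/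

lemma CompletedPrimitive.card_cutPairs_one {V : Type*} [Fintype V] {G : SimpleGraph V}
    (h : CompletedPrimitive G) (A : Finset V) (hA : A.card = 1) : (cutPairs G A).card = 4 := by
  obtain ⟨v, rfl⟩ := Finset.card_eq_one.1 hA
  rw [card_cutPairs_singleton, h.1]

lemma CompletedPrimitive.card_cutPairs_gt {V : Type*} [Fintype V] {G : SimpleGraph V}
    (h : CompletedPrimitive G) (A : Finset V) (hA : 2 ≤ A.card) (hA' : 2 ≤ Aᶜ.card) :
    4 < (cutPairs G A).card := by
  rw [← card_cutEdges]
  exact h.2.2.2 A hA hA'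

lemma card_cutPairs_zero {V : Type*} [Fintype V] (G : SimpleGraph V)
    (A : Finset V) (hA : A.card = 0) : (cutPairs G A).card = 0 := by
  obtain rfl := Finset.card_eq_zero.1 hA
  simp [cutPairs]

lemma CompletedPrimitive.five_le_card {V : Type*} [Fintype V] {G : SimpleGraph V}
    (h : CompletedPrimitive G) : 5 ≤ Fintype.card V := by
  obtain ⟨v⟩ := h.2.1.nonempty
  have := G.degree_lt_card_verts v
  rw [h.1] at this
  omega

/-! ### Cuts relative to a triangle -/

/-- The part of `cutPairs G A` not running inside the vertex set `T`. -/
noncomputable def cutPairsOff {V : Type*} [Fintype V] (G : SimpleGraph V) (T A : Finset V) :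
    Finset (V × V) :=
  (cutPairs G A).filter (fun p => ¬ (p.1 ∈ T ∧ p.2 ∈ T))

/-- If `T` is a clique, the cut of `A` contains exactly the `|T ∩ A| · |T \ A|` pairs inside `T`
that `A` separates. -/
lemma card_cutPairsOff {V : Type*} [Fintype V] (G : SimpleGraph V) (T A : Finset V)
    (hT : ∀ x ∈ T, ∀ y ∈ T, x ≠ y → G.Adj x y) :
    (cutPairsOff G T A).card + (T.filter (· ∈ A)).card * (T.filter (· ∉ A)).card
      = (cutPairs G A).card := by
  have h := Finset.card_filter_add_card_filter_not (s := cutPairs G A)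
    (fun p => p.1 ∈ T ∧ p.2 ∈ T)
  rw [← h, add_comm, ← Finset.card_product]
  unfold cutPairsOff
  congr 2
  ext ⟨x, y⟩
  simp only [Finset.mem_product, Finset.mem_filter, mem_cutPairs]
  constructor
  · rintro ⟨⟨h1, h2⟩, h3, h4⟩
    exact ⟨⟨h2, h4, hT x h1 y h3 (by rintro rfl; exact h4 h2)⟩, h1, h3⟩
  · rintro ⟨⟨h1, h2, -⟩, h3, h4⟩
    exact ⟨⟨h3, h1⟩, h4, h2⟩

/-! ### The two pieces inside the gluing -/

section Glue

variable {W₁ W₂ : Type*}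

/-- The inclusion of the first piece in the gluing. -/
def glueLeft (a₂ b₂ c₂ : W₂) (x : W₁) : GluedVert W₁ W₂ a₂ b₂ c₂ := Sum.inl x

/-- The inclusion of the second piece in the gluing: its triangle vertices are sent to the
corresponding triangle vertices of the first piece. -/
noncomputable def glueRight (a₁ b₁ c₁ : W₁) (a₂ b₂ c₂ : W₂) (z : W₂) :
    GluedVert W₁ W₂ a₂ b₂ c₂ :=
  if hz : InTriangle a₂ b₂ c₂ z then
    Sum.inl (if z = a₂ then a₁ else if z = b₂ then b₁ else c₁)
  else Sum.inr ⟨z, hz⟩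

lemma glue_adj_left (G₁ : SimpleGraph W₁) (G₂ : SimpleGraph W₂) (a₁ b₁ c₁ : W₁) (a₂ b₂ c₂ : W₂)
    (x y : W₁) : (glueOnTriangles G₁ G₂ a₁ b₁ c₁ a₂ b₂ c₂).Adj (Sum.inl x) (Sum.inl y) ↔
      G₁.Adj x y ∧ ¬ (InTriangle a₁ b₁ c₁ x ∧ InTriangle a₁ b₁ c₁ y) := by
  refine (SimpleGraph.fromRel_adj _ _ _).trans ?_
  constructor
  · rintro ⟨-, h | h⟩
    · exact h
    · exact ⟨h.1.symm, fun hh => h.2 hh.symm⟩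
  · intro h
    exact ⟨fun he => h.1.ne (Sum.inl.inj he), Or.inl h⟩

lemma glue_adj_mixed (G₁ : SimpleGraph W₁) (G₂ : SimpleGraph W₂) (a₁ b₁ c₁ : W₁)
    (a₂ b₂ c₂ : W₂) (x : W₁) (y : {z : W₂ // ¬ InTriangle a₂ b₂ c₂ z}) :
    (glueOnTriangles G₁ G₂ a₁ b₁ c₁ a₂ b₂ c₂).Adj (Sum.inl x) (Sum.inr y) ↔
      (x = a₁ ∧ G₂.Adj a₂ y.1) ∨ (x = b₁ ∧ G₂.Adj b₂ y.1) ∨ (x = c₁ ∧ G₂.Adj c₂ y.1) := by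
  refine (SimpleGraph.fromRel_adj _ _ _).trans ?_
  constructor
  · rintro ⟨-, h | h⟩
    · exact h
    · exact h.elim
  · intro h
    exact ⟨fun he => (nomatch he), Or.inl h⟩

lemma glue_adj_right (G₁ : SimpleGraph W₁) (G₂ : SimpleGraph W₂) (a₁ b₁ c₁ : W₁)
    (a₂ b₂ c₂ : W₂) (y z : {z : W₂ // ¬ InTriangle a₂ b₂ c₂ z}) :
    (glueOnTriangles G₁ G₂ a₁ b₁ c₁ a₂ b₂ c₂).Adj (Sum.inr y) (Sum.inr z) ↔
      G₂.Adj y.1 z.1 := by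
  refine (SimpleGraph.fromRel_adj _ _ _).trans ?_
  constructor
  · rintro ⟨-, h | h⟩
    · exact h
    · exact h.symm
  · intro h
    exact ⟨fun he => h.ne (congrArg Subtype.val (Sum.inr.inj he)), Or.inl h⟩

/-- The data describing how a graph `G` is covered by two graphs `G₁`, `G₂` overlapping in a
triangle whose edges are dropped. The sets `T₁`, `T₂` are the two copies of the triangle, and
`f₁`, `f₂` are the inclusions of the pieces. -/
structure IsGluing {V : Type*} (G : SimpleGraph V) (G₁ : SimpleGraph W₁)
    (G₂ : SimpleGraph W₂) (T₁ : Finset W₁) (T₂ : Finset W₂) (f₁ : W₁ → V) (f₂ : W₂ → V) :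
    Prop where
  inj₁ : Function.Injective f₁
  inj₂ : Function.Injective f₂
  cover : ∀ v, (∃ x, f₁ x = v) ∨ ∃ z, f₂ z = v
  image_eq : T₁.image f₁ = T₂.image f₂
  inter : ∀ x z, f₁ x = f₂ z → x ∈ T₁ ∧ z ∈ T₂
  adj : ∀ u v, G.Adj u v ↔
    (∃ x y, f₁ x = u ∧ f₁ y = v ∧ G₁.Adj x y ∧ ¬ (x ∈ T₁ ∧ y ∈ T₁)) ∨
    ∃ x y, f₂ x = u ∧ f₂ y = v ∧ G₂.Adj x y ∧ ¬ (x ∈ T₂ ∧ y ∈ T₂)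
  card₁ : T₁.card = 3
  card₂ : T₂.card = 3
  clique₁ : ∀ x ∈ T₁, ∀ y ∈ T₁, x ≠ y → G₁.Adj x y
  clique₂ : ∀ x ∈ T₂, ∀ y ∈ T₂, x ≠ y → G₂.Adj x y

lemma isGluing_glueOnTriangles (G₁ : SimpleGraph W₁) (G₂ : SimpleGraph W₂)
    (a₁ b₁ c₁ : W₁) (a₂ b₂ c₂ : W₂)
    (ht₁ : G₁.Adj a₁ b₁ ∧ G₁.Adj b₁ c₁ ∧ G₁.Adj a₁ c₁)
    (ht₂ : G₂.Adj a₂ b₂ ∧ G₂.Adj b₂ c₂ ∧ G₂.Adj a₂ c₂) :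
    IsGluing (glueOnTriangles G₁ G₂ a₁ b₁ c₁ a₂ b₂ c₂) G₁ G₂ {a₁, b₁, c₁} {a₂, b₂, c₂}
      (glueLeft a₂ b₂ c₂) (glueRight a₁ b₁ c₁ a₂ b₂ c₂) := by
  have n1 := ht₁.1.ne
  have n2 := ht₁.2.1.ne
  have n3 := ht₁.2.2.ne
  have m1 := ht₂.1.ne
  have m2 := ht₂.2.1.ne
  have m3 := ht₂.2.2.ne
  have ra : glueRight a₁ b₁ c₁ a₂ b₂ c₂ a₂ = Sum.inl a₁ := by
    simp [glueRight, InTriangle]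
    rfl
  have rb : glueRight a₁ b₁ c₁ a₂ b₂ c₂ b₂ = Sum.inl b₁ := by
    simp [glueRight, InTriangle, m1.symm]
    rfl
  have rc : glueRight a₁ b₁ c₁ a₂ b₂ c₂ c₂ = Sum.inl c₁ := by
    simp [glueRight, InTriangle, m2.symm, m3.symm]
    rfl
  have rr : ∀ z (hz : ¬ InTriangle a₂ b₂ c₂ z),
      glueRight a₁ b₁ c₁ a₂ b₂ c₂ z = Sum.inr ⟨z, hz⟩ := by
    intro z hz
    simp [glueRight, hz]
    rfl
  have rcase : ∀ z, z = a₂ ∨ z = b₂ ∨ z = c₂ ∨ ¬ InTriangle a₂ b₂ c₂ z := by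
    intro z; unfold InTriangle; tauto
  have rl : ∀ z x, glueRight a₁ b₁ c₁ a₂ b₂ c₂ z = Sum.inl x ↔
      (z = a₂ ∧ x = a₁) ∨ (z = b₂ ∧ x = b₁) ∨ (z = c₂ ∧ x = c₁) := by
    intro z x
    constructor
    · intro h
      rcases rcase z with rfl | rfl | rfl | hz
      · rw [ra] at h; exact Or.inl ⟨rfl, (Sum.inl.inj h).symm⟩
      · rw [rb] at h; exact Or.inr (Or.inl ⟨rfl, (Sum.inl.inj h).symm⟩)
      · rw [rc] at h; exact Or.inr (Or.inr ⟨rfl, (Sum.inl.inj h).symm⟩)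
      · rw [rr z hz] at h; cases h
    · rintro (⟨rfl, rfl⟩ | ⟨rfl, rfl⟩ | ⟨rfl, rfl⟩) <;> assumption
  have ri : ∀ z w, glueRight a₁ b₁ c₁ a₂ b₂ c₂ z = Sum.inr w ↔ z = w.1 := by
    intro z w
    constructor
    · intro h
      rcases rcase z with rfl | rfl | rfl | hz
      · rw [ra] at h; cases h
      · rw [rb] at h; cases h
      · rw [rc] at h; cases h
      · rw [rr z hz] at h
        exact congrArg Subtype.val (Sum.inr.inj h)
    · rintro rfl
      exact rr _ w.2
  refine ⟨?_, ?_, ?_, ?_, ?_, ?_, ?_, ?_, ?_, ?_⟩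
  · intro x y h
    exact Sum.inl.inj h
  · intro z w h
    rcases rcase w with rfl | rfl | rfl | hw
    · rw [ra, rl] at h
      grind
    · rw [rb, rl] at h
      grind
    · rw [rc, rl] at h
      grind
    · rw [rr w hw, ri] at h
      exact h
  · rintro (x | z)
    · exact Or.inl ⟨x, rfl⟩
    · exact Or.inr ⟨z.1, (ri _ _).2 rfl⟩
  · simp only [Finset.image_insert, Finset.image_singleton, ra, rb, rc]
    rfl
  · intro x z h
    have h' := (rl z x).1 h.symm
    simp only [Finset.mem_insert, Finset.mem_singleton]
    tauto
  · have el : ∀ x y : W₁, glueLeft a₂ b₂ c₂ x = Sum.inl y ↔ x = y :=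
      fun x y => ⟨fun h => Sum.inl.inj h, fun h => congrArg _ h⟩
    have er : ∀ (x : W₁) w, glueLeft a₂ b₂ c₂ x ≠ Sum.inr w := by
      intro x w h; cases h
    have mixed : ∀ (x : W₁) (w : {z : W₂ // ¬ InTriangle a₂ b₂ c₂ z}),
        (glueOnTriangles G₁ G₂ a₁ b₁ c₁ a₂ b₂ c₂).Adj (Sum.inl x) (Sum.inr w) ↔
        ∃ p, glueRight a₁ b₁ c₁ a₂ b₂ c₂ p = Sum.inl x ∧ G₂.Adj p w.1 := by
      intro x w
      simp only [glue_adj_mixed, rl]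
      constructor
      · rintro (⟨h, h'⟩ | ⟨h, h'⟩ | ⟨h, h'⟩)
        · exact ⟨a₂, by tauto, h'⟩
        · exact ⟨b₂, by tauto, h'⟩
        · exact ⟨c₂, by tauto, h'⟩
      · rintro ⟨p, ⟨rfl, rfl⟩ | ⟨rfl, rfl⟩ | ⟨rfl, rfl⟩, h⟩ <;> tauto
    have t₁ : ∀ x, x ∈ ({a₁, b₁, c₁} : Finset W₁) ↔ InTriangle a₁ b₁ c₁ x := by
      simp [InTriangle]
    have t₂ : ∀ x, x ∈ ({a₂, b₂, c₂} : Finset W₂) ↔ InTriangle a₂ b₂ c₂ x := by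
      simp [InTriangle]
    simp only [t₁, t₂]
    rintro (x | z) (y | w)
    · rw [glue_adj_left]
      constructor
      · rintro ⟨h, h'⟩
        exact Or.inl ⟨x, y, rfl, rfl, h, h'⟩
      · rintro (⟨x', y', hx, hy, h, h'⟩ | ⟨p, q, hp, hq, -, h'⟩)
        · obtain rfl := (el _ _).1 hx
          obtain rfl := (el _ _).1 hy
          exact ⟨h, h'⟩
        · rw [rl] at hp hq
          unfold InTriangle at h'
          tauto
    · rw [mixed]
      constructor
      · rintro ⟨p, hp, h⟩
        exact Or.inr ⟨p, w.1, hp, (ri _ _).2 rfl, h, fun hh => w.2 hh.2⟩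
      · rintro (⟨x', y', hx, hy, -⟩ | ⟨p, q, hp, hq, h, -⟩)
        · exact absurd hy (er _ _)
        · obtain rfl := (ri _ _).1 hq
          exact ⟨p, hp, h⟩
    · refine (SimpleGraph.adj_comm _ _ _).trans ((mixed y z).trans ?_)
      constructor
      · rintro ⟨p, hp, h⟩
        exact Or.inr ⟨z.1, p, (ri _ _).2 rfl, hp, h.symm, fun hh => z.2 hh.1⟩
      · rintro (⟨x', y', hx, hy, -⟩ | ⟨p, q, hp, hq, h, -⟩)
        · exact absurd hx (er _ _)
        · obtain rfl := (ri _ _).1 hp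
          exact ⟨q, hq, h.symm⟩
    · rw [glue_adj_right]
      constructor
      · intro h
        exact Or.inr ⟨z.1, w.1, (ri _ _).2 rfl, (ri _ _).2 rfl, h, fun hh => z.2 hh.1⟩
      · rintro (⟨x', y', hx, hy, -⟩ | ⟨p, q, hp, hq, h, -⟩)
        · exact absurd hx (er _ _)
        · obtain rfl := (ri _ _).1 hp
          obtain rfl := (ri _ _).1 hq
          exact h
  · exact Finset.card_eq_three.2 ⟨_, _, _, n1, n3, n2, rfl⟩
  · exact Finset.card_eq_three.2 ⟨_, _, _, m1, m3, m2, rfl⟩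
  · have s1 := ht₁.1.symm
    have s2 := ht₁.2.1.symm
    have s3 := ht₁.2.2.symm
    simp only [Finset.mem_insert, Finset.mem_singleton]
    rintro x (rfl | rfl | rfl) y (rfl | rfl | rfl) hxy <;> tauto
  · have s1 := ht₂.1.symm
    have s2 := ht₂.2.1.symm
    have s3 := ht₂.2.2.symm
    simp only [Finset.mem_insert, Finset.mem_singleton]
    rintro x (rfl | rfl | rfl) y (rfl | rfl | rfl) hxy <;> tauto

variable [Fintype W₁] [Fintype W₂] {V : Type*} {G : SimpleGraph V} {G₁ : SimpleGraph W₁}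
  {G₂ : SimpleGraph W₂} {T₁ : Finset W₁} {T₂ : Finset W₂} {f₁ : W₁ → V} {f₂ : W₂ → V}

/-- The trace of a vertex set of the gluing on a piece included by `f`. -/
noncomputable def traceOn {W V : Type*} [Fintype W] (f : W → V) (A : Finset V) : Finset W :=
  Finset.univ.filter (fun x => f x ∈ A)

lemma mem_traceOn {W V : Type*} [Fintype W] (f : W → V) (A : Finset V) (x : W) :
    x ∈ traceOn f A ↔ f x ∈ A := by simp [traceOn]

lemma card_filter_trace {W V : Type*} [Fintype W] (f : W → V) (hf : Function.Injective f)
    (T : Finset W) (A : Finset V) :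
    (T.filter (· ∈ traceOn f A)).card = ((T.image f).filter (· ∈ A)).card := by
  rw [Finset.filter_image, Finset.card_image_of_injective _ hf]
  simp only [mem_traceOn]

namespace IsGluing

/-- Inclusion–exclusion for the vertices: those of the triangle are counted twice. -/
lemma card_trace (h : IsGluing G G₁ G₂ T₁ T₂ f₁ f₂) (A : Finset V) :
    (traceOn f₁ A).card + (traceOn f₂ A).card
      = A.card + ((T₁.image f₁).filter (· ∈ A)).card := by
  have hu : (traceOn f₁ A).image f₁ ∪ (traceOn f₂ A).image f₂ = A := by
    ext v
    simp only [Finset.mem_union, Finset.mem_image, mem_traceOn]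
    constructor
    · rintro (⟨x, hx, rfl⟩ | ⟨x, hx, rfl⟩) <;> exact hx
    · intro hv
      rcases h.cover v with ⟨x, rfl⟩ | ⟨x, rfl⟩
      · exact Or.inl ⟨x, hv, rfl⟩
      · exact Or.inr ⟨x, hv, rfl⟩
  have hi : (traceOn f₁ A).image f₁ ∩ (traceOn f₂ A).image f₂
      = (T₁.image f₁).filter (· ∈ A) := by
    ext v
    simp only [Finset.mem_inter, Finset.mem_filter]
    constructor
    · simp only [Finset.mem_image, mem_traceOn]
      rintro ⟨⟨x, hx, rfl⟩, z, hz, hzx⟩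
      exact ⟨⟨x, (h.inter x z hzx.symm).1, rfl⟩, hx⟩
    · rintro ⟨hv, hA⟩
      have hv' := hv
      rw [h.image_eq] at hv'
      simp only [Finset.mem_image, mem_traceOn] at hv hv' ⊢
      obtain ⟨x, -, rfl⟩ := hv
      obtain ⟨z, -, hz⟩ := hv'
      exact ⟨⟨x, hA, rfl⟩, z, by rwa [hz], hz⟩
  have := Finset.card_union_add_card_inter
    ((traceOn f₁ A).image f₁) ((traceOn f₂ A).image f₂)
  rw [hu, hi, Finset.card_image_of_injective _ h.inj₁,
    Finset.card_image_of_injective _ h.inj₂] at this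
  exact this.symm

variable [Fintype V]

/-- Each edge of the gluing comes from exactly one of the two pieces. -/
lemma card_cutPairs_eq_off (h : IsGluing G G₁ G₂ T₁ T₂ f₁ f₂) (A : Finset V) :
    (cutPairs G A).card
      = (cutPairsOff G₁ T₁ (traceOn f₁ A)).card + (cutPairsOff G₂ T₂ (traceOn f₂ A)).card := by
  rw [← Finset.card_image_of_injective (cutPairsOff G₁ T₁ (traceOn f₁ A))
      (h.inj₁.prodMap h.inj₁),
    ← Finset.card_image_of_injective (cutPairsOff G₂ T₂ (traceOn f₂ A)) (h.inj₂.prodMap h.inj₂),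
    ← Finset.card_union_of_disjoint]
  · congr 1
    ext ⟨u, v⟩
    simp only [Finset.mem_union, Finset.mem_image, mem_cutPairs, cutPairsOff, Finset.mem_filter,
      mem_traceOn, Prod.exists, Prod.map, Prod.mk.injEq, h.adj u v]
    constructor
    · rintro ⟨hu, hv, ⟨x, y, rfl, rfl, h3, h4⟩ | ⟨x, y, rfl, rfl, h3, h4⟩⟩
      · exact Or.inl ⟨x, y, ⟨⟨hu, hv, h3⟩, h4⟩, rfl, rfl⟩
      · exact Or.inr ⟨x, y, ⟨⟨hu, hv, h3⟩, h4⟩, rfl, rfl⟩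
    · rintro (⟨x, y, ⟨⟨hu, hv, h3⟩, h4⟩, rfl, rfl⟩ | ⟨x, y, ⟨⟨hu, hv, h3⟩, h4⟩, rfl, rfl⟩)
      · exact ⟨hu, hv, Or.inl ⟨x, y, rfl, rfl, h3, h4⟩⟩
      · exact ⟨hu, hv, Or.inr ⟨x, y, rfl, rfl, h3, h4⟩⟩
  · rw [Finset.disjoint_left]
    rintro p hp hq
    simp only [Finset.mem_image, cutPairsOff, Finset.mem_filter] at hp hq
    obtain ⟨⟨x, y⟩, ⟨-, hn⟩, rfl⟩ := hp
    obtain ⟨⟨z, w⟩, -, he⟩ := hq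
    simp only [Prod.map, Prod.mk.injEq] at he
    exact hn ⟨(h.inter x z he.1.symm).1, (h.inter y w he.2.symm).1⟩

/-- The size of a cut of the gluing: if `A` contains `k` triangle vertices, the `k (3 - k)`
separated triangle edges are lost from both pieces. Here `l = 3 - k`, and the bounds on the traces
hold since each piece contains the triangle. -/
lemma card_cutPairs (h : IsGluing G G₁ G₂ T₁ T₂ f₁ f₂) (A : Finset V) :
    ∃ k l, k + l = 3 ∧ k = ((T₁.image f₁).filter (· ∈ A)).card ∧
      k ≤ (traceOn f₁ A).card ∧ k ≤ (traceOn f₂ A).card ∧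
      l ≤ (traceOn f₁ A)ᶜ.card ∧ l ≤ (traceOn f₂ A)ᶜ.card ∧
      (_root_.cutPairs G A).card + 2 * (k * l)
        = (_root_.cutPairs G₁ (traceOn f₁ A)).card + (_root_.cutPairs G₂ (traceOn f₂ A)).card := by
  have k1 := card_filter_trace f₁ h.inj₁ T₁ A
  have k2 := card_filter_trace f₂ h.inj₂ T₂ A
  rw [← h.image_eq] at k2
  have s1 := Finset.card_filter_add_card_filter_not (s := T₁) (· ∈ traceOn f₁ A)
  have s2 := Finset.card_filter_add_card_filter_not (s := T₂) (· ∈ traceOn f₂ A)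
  rw [h.card₁] at s1
  rw [h.card₂] at s2
  have e1 := card_cutPairsOff G₁ T₁ (traceOn f₁ A) h.clique₁
  have e2 := card_cutPairsOff G₂ T₂ (traceOn f₂ A) h.clique₂
  have e := h.card_cutPairs_eq_off A
  have i1 : (T₁.filter (· ∈ traceOn f₁ A)).card ≤ (traceOn f₁ A).card :=
    Finset.card_le_card (fun x hx => (Finset.mem_filter.1 hx).2)
  have i2 : (T₂.filter (· ∈ traceOn f₂ A)).card ≤ (traceOn f₂ A).card :=
    Finset.card_le_card (fun x hx => (Finset.mem_filter.1 hx).2)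
  have j1 : (T₁.filter (· ∉ traceOn f₁ A)).card ≤ (traceOn f₁ A)ᶜ.card :=
    Finset.card_le_card (fun x hx => Finset.mem_compl.2 (Finset.mem_filter.1 hx).2)
  have j2 : (T₂.filter (· ∉ traceOn f₂ A)).card ≤ (traceOn f₂ A)ᶜ.card :=
    Finset.card_le_card (fun x hx => Finset.mem_compl.2 (Finset.mem_filter.1 hx).2)
  have l12 : (T₂.filter (· ∉ traceOn f₂ A)).card = (T₁.filter (· ∉ traceOn f₁ A)).card := by
    omega
  rw [k2, ← k1] at i2 e2
  rw [l12] at e2 j2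
  exact ⟨_, _, s1, k1, i1, i2, j1, j2, by omega⟩

lemma degree_eq (h : IsGluing G G₁ G₂ T₁ T₂ f₁ f₂) (h₁ : CompletedPrimitive G₁)
    (h₂ : CompletedPrimitive G₂) (v : V) : G.degree v = 4 := by
  rw [← card_cutPairs_singleton]
  obtain ⟨k, l, hkl, hk, i1, i2, j1, j2, e⟩ := h.card_cutPairs {v}
  have hc := h.card_trace {v}
  rw [← hk, Finset.card_singleton] at hc
  have z1 := card_cutPairs_zero G₁ (traceOn f₁ {v})
  have z2 := card_cutPairs_zero G₂ (traceOn f₂ {v})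
  have o1 := h₁.card_cutPairs_one (traceOn f₁ {v})
  have o2 := h₂.card_cutPairs_one (traceOn f₂ {v})
  -- `k ≤ 1`: each trace has at least `k` vertices, and together they have `1 + k`
  obtain rfl | rfl : k = 0 ∨ k = 1 := by omega
  · omega
  · obtain rfl : l = 2 := by omega
    omega

/-- A set with at least two vertices, at most one of them in the triangle, has a large cut; its
complement is automatically nontrivial in both pieces. -/
lemma cut_gt_of_le_one (h : IsGluing G G₁ G₂ T₁ T₂ f₁ f₂) (h₁ : CompletedPrimitive G₁)
    (h₂ : CompletedPrimitive G₂) (A : Finset V) (hA : 2 ≤ A.card)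
    (hT : ((T₁.image f₁).filter (· ∈ A)).card ≤ 1) : 4 < (_root_.cutPairs G A).card := by
  obtain ⟨k, l, hkl, hk, i1, i2, j1, j2, e⟩ := h.card_cutPairs A
  have hc := h.card_trace A
  rw [← hk] at hc hT
  have o1 := h₁.card_cutPairs_one (traceOn f₁ A)
  have o2 := h₂.card_cutPairs_one (traceOn f₂ A)
  have g1 := h₁.card_cutPairs_gt (traceOn f₁ A)
  have g2 := h₂.card_cutPairs_gt (traceOn f₂ A)
  obtain rfl | rfl : k = 0 ∨ k = 1 := by omega
  · omega
  · obtain rfl : l = 2 := by omega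
    omega

/-- One of the two sides of a cut contains at most one triangle vertex. -/
lemma cut_gt (h : IsGluing G G₁ G₂ T₁ T₂ f₁ f₂) (h₁ : CompletedPrimitive G₁)
    (h₂ : CompletedPrimitive G₂) (A : Finset V) (hA : 2 ≤ A.card) (hA' : 2 ≤ Aᶜ.card) :
    4 < (_root_.cutPairs G A).card := by
  have hs := Finset.card_filter_add_card_filter_not (s := T₁.image f₁) (· ∈ A)
  rw [Finset.card_image_of_injective _ h.inj₁, h.card₁] at hs
  rcases le_or_gt ((T₁.image f₁).filter (· ∈ A)).card 1 with hT | hT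
  · exact h.cut_gt_of_le_one h₁ h₂ A hA hT
  · rw [← card_cutPairs_compl]
    refine h.cut_gt_of_le_one h₁ h₂ Aᶜ hA' ?_
    simp only [Finset.mem_compl]
    omega

end IsGluing

end Glue

lemma exists_not_inTriangle {W : Type*} [Fintype W] {G : SimpleGraph W}
    (h : CompletedPrimitive G) (a b c : W) : ∃ x, ¬ InTriangle a b c x := by
  by_contra hcon
  push Not at hcon
  have hsub : (Finset.univ : Finset W) ⊆ {a, b, c} := by
    intro x _
    simpa [InTriangle] using hcon x
  have h1 := Finset.card_le_card hsub
  have h2 := Finset.card_le_three (a := a) (b := b) (c := c)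
  have h3 := h.five_le_card
  rw [Finset.card_univ] at h1
  omega

/-- Gluing two completed primitive graphs along triangles and deleting the triangle edges
yields a completed primitive 4-regular graph which is *reducible*: its vertex-connectivity
is exactly 3, the three identified vertices disconnecting it. -/
theorem glueOnTriangles_completedPrimitive {W₁ W₂ : Type*} [Fintype W₁] [Fintype W₂]
    (G₁ : SimpleGraph W₁) (G₂ : SimpleGraph W₂)
    (h₁ : CompletedPrimitive G₁) (h₂ : CompletedPrimitive G₂)
    (a₁ b₁ c₁ : W₁) (a₂ b₂ c₂ : W₂)
    (ht₁ : G₁.Adj a₁ b₁ ∧ G₁.Adj b₁ c₁ ∧ G₁.Adj a₁ c₁)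
    (ht₂ : G₂.Adj a₂ b₂ ∧ G₂.Adj b₂ c₂ ∧ G₂.Adj a₂ c₂) :
    CompletedPrimitive (glueOnTriangles G₁ G₂ a₁ b₁ c₁ a₂ b₂ c₂) ∧
    (∀ S : Finset (GluedVert W₁ W₂ a₂ b₂ c₂), S.card ≤ 2 →
      ((glueOnTriangles G₁ G₂ a₁ b₁ c₁ a₂ b₂ c₂).induce ((↑S : Set _)ᶜ)).Connected) ∧
    ¬ ((glueOnTriangles G₁ G₂ a₁ b₁ c₁ a₂ b₂ c₂).induce
        (({Sum.inl a₁, Sum.inl b₁, Sum.inl c₁} : Set (GluedVert W₁ W₂ a₂ b₂ c₂))ᶜ)).Connected := by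
  have hg := isGluing_glueOnTriangles G₁ G₂ a₁ b₁ c₁ a₂ b₂ c₂ ht₁ ht₂
  have hdeg := hg.degree_eq h₁ h₂
  have hcut := hg.cut_gt h₁ h₂
  have : Nonempty (GluedVert W₁ W₂ a₂ b₂ c₂) := ⟨Sum.inl a₁⟩
  have hconn := induce_compl_connected (glueOnTriangles G₁ G₂ a₁ b₁ c₁ a₂ b₂ c₂) hdeg hcut
  refine ⟨⟨hdeg, ?_, ?_, ?_⟩, hconn, ?_⟩
  · have h := hconn ∅ (by simp)
    rw [Finset.coe_empty, Set.compl_empty] at h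
    exact (SimpleGraph.induceUnivIso _).connected_iff.1 h
  · have h5 := h₁.five_le_card
    have := Fintype.card_le_of_injective _ hg.inj₁
    omega
  · intro A hA hA'
    rw [card_cutEdges]
    exact hcut A hA hA'
  · intro hcon
    obtain ⟨x, hx⟩ := exists_not_inTriangle h₁ a₁ b₁ c₁
    obtain ⟨z, hz⟩ := exists_not_inTriangle h₂ a₂ b₂ c₂
    -- starting in the first piece, a walk avoiding the triangle never leaves that piece
    have key : ∀ u v : ↥(({Sum.inl a₁, Sum.inl b₁, Sum.inl c₁} :
        Set (GluedVert W₁ W₂ a₂ b₂ c₂))ᶜ),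
        ((glueOnTriangles G₁ G₂ a₁ b₁ c₁ a₂ b₂ c₂).induce _).Walk u v →
        (∃ y, u.1 = Sum.inl y) → ∃ y, v.1 = Sum.inl y := by
      intro u v p
      induction p with
      | nil => exact id
      | @cons u v w huv _ ih =>
        rintro ⟨y, hy⟩
        apply ih
        obtain ⟨u, hu⟩ := u
        obtain ⟨v, hv⟩ := v
        obtain rfl : u = Sum.inl y := hy
        rcases v with y' | z'
        · exact ⟨y', rfl⟩
        · exfalso
          have hadj : (glueOnTriangles G₁ G₂ a₁ b₁ c₁ a₂ b₂ c₂).Adj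
            (Sum.inl y) (Sum.inr z') := huv
          rw [glue_adj_mixed] at hadj
          apply hu
          rcases hadj with ⟨rfl, -⟩ | ⟨rfl, -⟩ | ⟨rfl, -⟩
          · exact Or.inl rfl
          · exact Or.inr (Or.inl rfl)
          · exact Or.inr (Or.inr rfl)
    have hxT : (Sum.inl x : GluedVert W₁ W₂ a₂ b₂ c₂) ∈ (({Sum.inl a₁, Sum.inl b₁, Sum.inl c₁} :
        Set (GluedVert W₁ W₂ a₂ b₂ c₂))ᶜ) := by
      rintro (h | h | h)
      · exact hx (Or.inl (Sum.inl.inj h))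
      · exact hx (Or.inr (Or.inl (Sum.inl.inj h)))
      · exact hx (Or.inr (Or.inr (Sum.inl.inj h)))
    have hzT : (Sum.inr ⟨z, hz⟩ : GluedVert W₁ W₂ a₂ b₂ c₂) ∈
        (({Sum.inl a₁, Sum.inl b₁, Sum.inl c₁} : Set (GluedVert W₁ W₂ a₂ b₂ c₂))ᶜ) := by
      rintro (h | h | h) <;> cases h
    obtain ⟨p⟩ := hcon.preconnected ⟨_, hxT⟩ ⟨_, hzT⟩
    obtain ⟨y, hy⟩ := key _ _ p ⟨x, rfl⟩
    cases hy
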